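/- Let X be a type with a bijection b : X ≃ ℕ, and let ψ : ℕ → (X →. X) be a family of partial functions on X (thought of as the functions computed by the machines of some model of computation over X, such as RNN machines over finite sequences of rational vectors). Define the induced numbering ψ' : ℕ → (ℕ →. ℕ) by ψ' e n = (ψ e (b.symm n)).map b, and suppose ψ' is an acceptable numbering of the partial computable functions: there exist computable f, g : ℕ → ℕ with ψ' e = φ (f e) and φ e = ψ' (g e) for all e, where φ is the canonical numbering. Then every set P ⊆ ℕ that is nontrivial (P ≠ ∅ and P ≠ ℕ) and extensional with respect to ψ (for all m, n, ψ m = ψ n implies (m ∈ P ↔ n ∈ P)) is undecidable, i.e., ¬ ComputablePred (· ∈ P). -/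

import Mathlib

/-- The canonical numbering of the partial computable functions:
`e ↦` the partial function computed by the `e`-th code. -/
def canonicalNumbering (e : ℕ) : ℕ →. ℕ :=
  Nat.Partrec.Code.eval (Denumerable.ofNat Nat.Partrec.Code e)

/-!
Composing with the completeness reduction `g` turns a decidable extensional set of indices of a
numbering into a decidable extensional set of codes, which is trivial by Rice's theorem for codes.
Since every function in the numbering is partial computable, every index is equivalent to one in
the range of `g`, so triviality on that range propagates to the whole index set. Conjugating by a
bijection does not change which indices compute the same function.
-/

section PartialFunctions

variable {X Y : Type*}

/-- The conjugate of a partial function `p` on `X` by a bijection `b : X ≃ Y`: it decodes its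
argument by `b.symm`, runs `p`, and encodes the result by `b`. The numbering induced by a family
`ψ` is `fun e ↦ pfunConj b (ψ e)`. -/
def pfunConj (b : X ≃ Y) (p : X →. X) : Y →. Y :=
  fun y ↦ (p (b.symm y)).map b

theorem part_map_injective {f : X → Y} (hf : f.Injective) : (Part.map f).Injective := by
  intro p q h
  ext x
  simpa [hf.eq_iff] using (Part.ext_iff.mp h) (f x)

theorem pfunConj_injective (b : X ≃ Y) : (pfunConj b).Injective :=
  (part_map_injective b.injective).comp_left.comp b.symm.surjective.injective_comp_right

end PartialFunctions

section Numberings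

open Nat.Partrec (Code)

theorem canonicalNumbering_partrec (e : ℕ) : Nat.Partrec (canonicalNumbering e) :=
  Code.exists_code.mpr ⟨_, rfl⟩

theorem canonicalNumbering_encode (c : Code) :
    canonicalNumbering (Encodable.encode c) = c.eval := by
  rw [canonicalNumbering, Denumerable.ofNat_encode]

theorem eq_empty_or_eq_univ_of_complete_numbering {ι : Type*} [Primcodable ι]
    {α : ι → (ℕ →. ℕ)} (hα : ∀ i, Nat.Partrec (α i))
    {g : Code → ι} (hg : Computable g) (hcompl : ∀ c, α (g c) = c.eval)
    {P : Set ι} (hP : ComputablePred (· ∈ P))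
    (hext : ∀ i j, α i = α j → (i ∈ P ↔ j ∈ P)) :
    P = ∅ ∨ P = Set.univ := by
  have hpre : ComputablePred (· ∈ g ⁻¹' P) :=
    ComputablePred.computable_of_manyOneReducible ⟨g, hg, fun _ ↦ Iff.rfl⟩ hP
  have hpre_ext : ∀ c d : Code, c.eval = d.eval → (c ∈ g ⁻¹' P ↔ d ∈ g ⁻¹' P) :=
    fun c d h ↦ hext _ _ (by rwa [hcompl, hcompl])
  have exists_mem_iff (i : ι) : ∃ c, i ∈ P ↔ c ∈ g ⁻¹' P := by
    obtain ⟨c, hc⟩ := Code.exists_code.mp (hα i)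
    exact ⟨c, hext _ _ (hc.symm.trans (hcompl c).symm)⟩
  refine ((ComputablePred.rice₂ _ hpre_ext).mp hpre).imp (fun h ↦ ?_) (fun h ↦ ?_)
  · refine Set.eq_empty_of_forall_notMem fun i hi ↦ ?_
    obtain ⟨c, hc⟩ := exists_mem_iff i
    exact Set.notMem_empty c (h ▸ hc.mp hi)
  · refine Set.eq_univ_of_forall fun i ↦ ?_
    obtain ⟨c, hc⟩ := exists_mem_iff i
    exact hc.mpr (h ▸ Set.mem_univ c)

end Numberings

theorem rice_theorem_for_machines_general {ι X : Type*} [Primcodable ι] (b : X ≃ ℕ)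
    (ψ : ι → (X →. X)) (hψ : ∀ i, Nat.Partrec (pfunConj b (ψ i)))
    (g : ℕ → ι) (hg : Computable g)
    (hcompl : ∀ e, canonicalNumbering e = pfunConj b (ψ (g e)))
    (P : Set ι) (hne : P ≠ ∅) (hnuniv : P ≠ Set.univ)
    (hext : ∀ i j, ψ i = ψ j → (i ∈ P ↔ j ∈ P)) :
    ¬ ComputablePred (· ∈ P) := by
  intro hP
  have hcompl_code (c : Nat.Partrec.Code) :
      pfunConj b (ψ (g (Encodable.encode c))) = c.eval := by
    rw [← hcompl, canonicalNumbering_encode]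
  have hext_conj : ∀ i j, pfunConj b (ψ i) = pfunConj b (ψ j) → (i ∈ P ↔ j ∈ P) :=
    fun i j h ↦ hext i j (pfunConj_injective b h)
  exact (eq_empty_or_eq_univ_of_complete_numbering hψ (hg.comp Computable.encode)
    hcompl_code hP hext_conj).elim hne hnuniv

/-- **Rice's theorem for machines over an abstract domain `X`** (e.g. RNN
machines over finite sequences of rational vectors): if the numbering induced
by conjugating the computed functions with a bijection `b : X ≃ ℕ` is an
acceptable numbering, then every nontrivial set of indices that is extensional
with respect to the family of computed functions is undecidable. -/
theorem rice_theorem_for_machines {X : Type*} (b : X ≃ ℕ)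
    (ψ : ℕ → (X →. X))
    (ψ' : ℕ → (ℕ →. ℕ))
    (hψ' : ∀ (e : ℕ) (n : ℕ), ψ' e n = (ψ e (b.symm n)).map ⇑b)
    (f g : ℕ → ℕ) (hf : Computable f) (hg : Computable g)
    (hcomp : ∀ e : ℕ, ψ' e = canonicalNumbering (f e))
    (hcompl : ∀ e : ℕ, canonicalNumbering e = ψ' (g e))
    (P : Set ℕ)
    (hne : P ≠ ∅) (hnuniv : P ≠ Set.univ)
    (hext : ∀ m n : ℕ, ψ m = ψ n → (m ∈ P ↔ n ∈ P)) :
    ¬ ComputablePred (· ∈ P) := by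
  obtain rfl : ψ' = fun e ↦ pfunConj b (ψ e) := funext₂ hψ'
  exact rice_theorem_for_machines_general b ψ
    (fun e ↦ (congrArg Nat.Partrec (hcomp e)).mpr (canonicalNumbering_partrec (f e)))
    g hg hcompl P hne hnuniv hext
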